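/- arXiv:alg-geom/9701014 — 3 statements merged into one kernel-verified Lean document; each statement's English description precedes it below -/
import Mathlib

section
/- Let V₁ and V₂ be finite-dimensional left modules over the quaternion algebra ℍ, let U₁ ⊆ V₁ be an open connected neighborhood of 0, and let f : V₁ → V₂ be a map that is smooth (C^∞ over ℝ) on U₁, satisfies f(0) = 0, and whose ℝ-Fréchet derivative at every point x ∈ U₁ commutes with scalar multiplication by the quaternion units i and j (i.e. fderiv_ℝ f x (i • v) = i • fderiv_ℝ f x v and fderiv_ℝ f x (j • v) = j • fderiv_ℝ f x v for all v ∈ V₁). Then there exists an ℍ-linear map L : V₁ → V₂ such that f(x) = L(x) for all x ∈ U₁. -/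
/-- The quaternion unit `i`. -/
def Quaternion.unitI : Quaternion ℝ := ⟨0, 1, 0, 0⟩

/-- The quaternion unit `j`. -/
def Quaternion.unitJ : Quaternion ℝ := ⟨0, 0, 1, 0⟩

/-!
Let `A` be an algebra in which some commutator `a * b - b * a` is invertible, and let the derivative
of `f` be `A`-linear at every point of `U`. Differentiating once more, the second derivative
`B = D²f(x)` is `A`-linear in its second argument, hence, being symmetric, in both. Evaluating
`B (a • u) (b • v)` in two ways gives `(a * b) • B u v = (b * a) • B u v`, so `B = 0`. The
derivative of `f` is therefore constant on the connected set `U`, and `f` is its own linearization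
at `0`. For the quaternions, `i * j - j * i = 2 * k` is invertible.
-/

section Algebra

theorem map_smul_of_adjoin_eq_top {R A M N : Type*} [CommSemiring R] [Semiring A] [Algebra R A]
    [AddCommMonoid M] [Module R M] [Module A M] [IsScalarTower R A M]
    [AddCommMonoid N] [Module R N] [Module A N] [IsScalarTower R A N]
    {s : Set A} (hs : Algebra.adjoin R s = ⊤) (T : M →ₗ[R] N)
    (hT : ∀ a ∈ s, ∀ v, T (a • v) = a • T v) (a : A) (v : M) : T (a • v) = a • T v := by
  have ha : a ∈ Algebra.adjoin R s := hs ▸ Algebra.mem_top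
  induction ha using Algebra.adjoin_induction generalizing v with
  | mem a ha => exact hT a ha v
  | algebraMap r => simp only [algebraMap_smul, map_smul]
  | add a b _ _ iha ihb => simp only [add_smul, map_add, iha, ihb]
  | mul a b _ _ iha ihb => simp only [mul_smul, iha, ihb]

theorem commutator_smul_eq_zero_of_symm {A M N : Type*} [Ring A] [SMul A M] [AddCommGroup N]
    [Module A N] {B : M → M → N} (hsymm : ∀ u v, B u v = B v u)
    (hsmul : ∀ (c : A) u v, B u (c • v) = c • B u v) (a b : A) (u v : M) :
    (a * b - b * a) • B u v = 0 := by
  have hsmul_left (c : A) (u v : M) : B (c • u) v = c • B u v := by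
    rw [hsymm, hsmul, hsymm]
  rw [sub_smul, sub_eq_zero]
  calc (a * b) • B u v = B (a • u) (b • v) := by rw [hsmul_left, hsmul, mul_smul]
    _ = (b * a) • B u v := by rw [hsmul, hsmul_left, mul_smul]

end Algebra

section Calculus

theorem continuousConstSMul_of_finiteDimensional (𝕜 A F : Type*) [NontriviallyNormedField 𝕜]
    [CompleteSpace 𝕜] [Monoid A] [AddCommGroup F] [Module 𝕜 F] [DistribMulAction A F]
    [SMulCommClass A 𝕜 F] [TopologicalSpace F] [IsTopologicalAddGroup F] [ContinuousSMul 𝕜 F]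
    [T2Space F] [FiniteDimensional 𝕜 F] : ContinuousConstSMul A F where
  continuous_const_smul a :=
    (DistribSMul.toLinearMap 𝕜 F a).continuous_of_finiteDimensional

theorem map_smul_of_hasFDerivAt {𝕜 A D E F : Type*} [NontriviallyNormedField 𝕜] [Monoid A]
    [NormedAddCommGroup D] [NormedSpace 𝕜 D]
    [NormedAddCommGroup E] [NormedSpace 𝕜 E] [SMul A E]
    [NormedAddCommGroup F] [NormedSpace 𝕜 F] [DistribMulAction A F] [SMulCommClass 𝕜 A F]
    [ContinuousConstSMul A F] {g : D → E →L[𝕜] F} {B : D →L[𝕜] E →L[𝕜] F} {x : D} {a : A} {v : E}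
    (hB : HasFDerivAt g B x) (hg : ∀ᶠ y in nhds x, g y (a • v) = a • g y v) (u : D) :
    B u (a • v) = a • B u v := by
  have hleft : HasFDerivAt (fun y => g y (a • v)) (B.flip (a • v)) x := by
    simpa using hB.clm_apply (hasFDerivAt_const (a • v) x)
  have hright : HasFDerivAt (fun y => a • g y v) (a • B.flip v) x := by
    simpa using (hB.clm_apply (hasFDerivAt_const v x)).fun_const_smul a
  exact DFunLike.congr_fun (hleft.unique (hright.congr_of_eventuallyEq hg)) u

variable {𝕜 A E F : Type*} [RCLike 𝕜]
  [NormedAddCommGroup E] [NormedSpace 𝕜 E] [NormedAddCommGroup F] [NormedSpace 𝕜 F]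
  {U : Set E} {f : E → F}

theorem fderiv_fderiv_eq_zero_of_map_smul [Ring A] [SMul A E] [Module A F] [SMulCommClass 𝕜 A F]
    [ContinuousConstSMul A F] {a b : A} (hab : IsUnit (a * b - b * a)) {x : E}
    (hf : ∀ᶠ y in nhds x, DifferentiableAt 𝕜 f y) (hf' : DifferentiableAt 𝕜 (fderiv 𝕜 f) x)
    (hsmul : ∀ᶠ y in nhds x, ∀ (c : A) v, fderiv 𝕜 f y (c • v) = c • fderiv 𝕜 f y v) :
    fderiv 𝕜 (fderiv 𝕜 f) x = 0 := by
  have hsymm : ∀ u v, fderiv 𝕜 (fderiv 𝕜 f) x u v = fderiv 𝕜 (fderiv 𝕜 f) x v u :=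
    second_derivative_symmetric_of_eventually (hf.mono fun _ hy => hy.hasFDerivAt) hf'.hasFDerivAt
  have hsmul₂ (c : A) (u v : E) :
      fderiv 𝕜 (fderiv 𝕜 f) x u (c • v) = c • fderiv 𝕜 (fderiv 𝕜 f) x u v :=
    map_smul_of_hasFDerivAt hf'.hasFDerivAt (hsmul.mono fun _ hy => hy c v) u
  ext u v
  exact hab.smul_eq_zero.mp (commutator_smul_eq_zero_of_symm hsymm hsmul₂ a b u v)

theorem eqOn_fderiv_of_fderiv_fderiv_eq_zero (hU : IsOpen U) (hUconn : IsPreconnected U)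
    (h0 : (0 : E) ∈ U) (hf : DifferentiableOn 𝕜 f U) (hf' : DifferentiableOn 𝕜 (fderiv 𝕜 f) U)
    (hf0 : f 0 = 0) (hf'' : ∀ x ∈ U, fderiv 𝕜 (fderiv 𝕜 f) x = 0) :
    Set.EqOn f (fderiv 𝕜 f 0) U := by
  let : NormedSpace ℝ E := NormedSpace.restrictScalars ℝ 𝕜 E
  have hconst (x : E) (hx : x ∈ U) : fderiv 𝕜 f x = fderiv 𝕜 f 0 :=
    hU.is_const_of_fderiv_eq_zero hUconn hf' hf'' hx h0
  refine hU.eqOn_of_fderiv_eq hUconn hf (fderiv 𝕜 f 0).differentiableOn (fun x hx => ?_) h0 ?_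
  · rw [hconst x hx, ContinuousLinearMap.fderiv]
  · rw [hf0, map_zero]

theorem quaternionic_morphism_is_linear_general [Ring A] [Algebra 𝕜 A]
    [Module A E] [IsScalarTower 𝕜 A E] [Module A F] [IsScalarTower 𝕜 A F] [ContinuousConstSMul A F]
    {s : Set A} (hs : Algebra.adjoin 𝕜 s = ⊤) {a b : A} (hab : IsUnit (a * b - b * a))
    (hU : IsOpen U) (hUconn : IsPreconnected U) (h0 : (0 : E) ∈ U)
    (hf : DifferentiableOn 𝕜 f U) (hf' : DifferentiableOn 𝕜 (fderiv 𝕜 f) U) (hf0 : f 0 = 0)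
    (hsmul : ∀ c ∈ s, ∀ x ∈ U, ∀ v, fderiv 𝕜 f x (c • v) = c • fderiv 𝕜 f x v) :
    ∃ L : E →ₗ[A] F, ∀ x ∈ U, f x = L x := by
  have hlin (x : E) (hx : x ∈ U) (c : A) (v : E) : fderiv 𝕜 f x (c • v) = c • fderiv 𝕜 f x v :=
    map_smul_of_adjoin_eq_top hs (fderiv 𝕜 f x : E →ₗ[𝕜] F) (fun c hc => hsmul c hc x hx) c v
  have hf'' (x : E) (hx : x ∈ U) : fderiv 𝕜 (fderiv 𝕜 f) x = 0 :=
    have hUx : U ∈ nhds x := hU.mem_nhds hx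
    fderiv_fderiv_eq_zero_of_map_smul hab (hf.eventually_differentiableAt hUx)
      (hf'.differentiableAt hUx) (Filter.eventually_of_mem hUx hlin)
  exact ⟨{ toFun := fderiv 𝕜 f 0, map_add' := map_add _, map_smul' := hlin 0 h0 },
    eqOn_fderiv_of_fderiv_fderiv_eq_zero hU hUconn h0 hf hf' hf0 hf''⟩

end Calculus

section QuaternionUnits

open Quaternion QuaternionAlgebra

theorem adjoin_basis_self_eq_top {R : Type*} [CommRing R] {c₁ c₂ c₃ : R} :
    Algebra.adjoin R {(Basis.self R : Basis ℍ[R,c₁,c₂,c₃] c₁ c₂ c₃).i, (Basis.self R).j} = ⊤ := by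
  refine Algebra.eq_top_iff.mpr fun q => ?_
  set S := Algebra.adjoin R {(Basis.self R : Basis ℍ[R,c₁,c₂,c₃] c₁ c₂ c₃).i, (Basis.self R).j}
  have hi : (Basis.self R).i ∈ S := Algebra.subset_adjoin (Set.mem_insert _ _)
  have hj : (Basis.self R).j ∈ S := Algebra.subset_adjoin (Set.mem_insert_of_mem _ rfl)
  have hk : (Basis.self R).k ∈ S := (Basis.self R).i_mul_j ▸ mul_mem hi hj
  have hq : q = (Basis.self R).lift q := by ext <;> simp [Basis.lift]
  rw [hq]
  exact add_mem (add_mem (add_mem (S.algebraMap_mem _) (S.smul_mem hi _)) (S.smul_mem hj _))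
    (S.smul_mem hk _)

theorem adjoin_unitI_unitJ_eq_top : Algebra.adjoin ℝ {unitI, unitJ} = ⊤ :=
  adjoin_basis_self_eq_top

theorem imK_commutator_unitI_unitJ : (unitI * unitJ - unitJ * unitI).imK = 2 := by
  rw [Quaternion.imK_sub, Quaternion.imK_mul, Quaternion.imK_mul]
  norm_num [unitI, unitJ]

theorem isUnit_commutator_unitI_unitJ : IsUnit (unitI * unitJ - unitJ * unitI) := by
  refine isUnit_iff_ne_zero.mpr fun h => two_ne_zero (α := ℝ) ?_
  rw [← imK_commutator_unitI_unitJ, h, Quaternion.imK_zero]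

end QuaternionUnits

/-- Deligne's lemma: a smooth map between open neighbourhoods of `0`
in finite-dimensional quaternionic vector spaces, sending `0` to `0`, whose real
derivative everywhere commutes with scalar multiplication by the quaternion units
`i` and `j`, is the restriction of an ℍ-linear map. -/
theorem quaternionic_morphism_is_linear
    {V₁ V₂ : Type*}
    [NormedAddCommGroup V₁] [NormedSpace ℝ V₁]
    [Module (Quaternion ℝ) V₁] [IsScalarTower ℝ (Quaternion ℝ) V₁]
    [FiniteDimensional ℝ V₁]
    [NormedAddCommGroup V₂] [NormedSpace ℝ V₂]
    [Module (Quaternion ℝ) V₂] [IsScalarTower ℝ (Quaternion ℝ) V₂]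
    [FiniteDimensional ℝ V₂]
    (U₁ : Set V₁) (hU₁open : IsOpen U₁) (hU₁conn : IsConnected U₁)
    (hU₁zero : (0 : V₁) ∈ U₁)
    (f : V₁ → V₂)
    (hsmooth : ContDiffOn ℝ (⊤ : ℕ∞) f U₁)
    (hf0 : f 0 = 0)
    (hdI : ∀ x ∈ U₁, ∀ v : V₁,
      fderiv ℝ f x (Quaternion.unitI • v) = Quaternion.unitI • fderiv ℝ f x v)
    (hdJ : ∀ x ∈ U₁, ∀ v : V₁,
      fderiv ℝ f x (Quaternion.unitJ • v) = Quaternion.unitJ • fderiv ℝ f x v) :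
    ∃ L : V₁ →ₗ[Quaternion ℝ] V₂, ∀ x ∈ U₁, f x = L x := by
  have : ContinuousConstSMul (Quaternion ℝ) V₂ := continuousConstSMul_of_finiteDimensional ℝ _ _
  have hsmooth' : DifferentiableOn ℝ (fderiv ℝ f) U₁ :=
    (hsmooth.fderiv_of_isOpen hU₁open (m := 1) (by norm_cast)).differentiableOn one_ne_zero
  exact quaternionic_morphism_is_linear_general adjoin_unitI_unitJ_eq_top
    isUnit_commutator_unitI_unitJ hU₁open hU₁conn.isPreconnected hU₁zero
    (hsmooth.differentiableOn (by simp)) hsmooth' hf0 (by simpa using ⟨hdI, hdJ⟩)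
end

section
/- Let V and W be left modules over the quaternion algebra ℍ (in particular real vector spaces via the embedding ℝ ⊆ ℍ). Let H : V × V → W be a symmetric ℝ-bilinear map that is ℍ-linear in the first variable, i.e. H(q • x, y) = q • H(x, y) for all q ∈ ℍ and x, y ∈ V. Then H = 0. -/
theorem mul_smul_swap_of_symm_of_smul_left {R V W : Type*} [Semigroup R] [SMul R V]
    [SemigroupAction R W] {H : V → V → W} (hsymm : ∀ x y, H x y = H y x)
    (hsmul : ∀ (r : R) (x y : V), H (r • x) y = r • H x y) (p q : R) (x y : V) :
    (p * q) • H x y = (q * p) • H x y := by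
  have hsmul_right (r : R) (x y : V) : H x (r • y) = r • H x y := by
    rw [hsymm, hsmul, hsymm]
  calc (p * q) • H x y = p • H x (q • y) := by rw [mul_smul, hsmul_right]
    _ = H (p • x) (q • y) := (hsmul p x (q • y)).symm
    _ = q • H (p • x) y := hsmul_right q (p • x) y
    _ = (q * p) • H x y := by rw [mul_smul, hsmul]

theorem symm_bilinear_quaternionic_linear_eq_zero_general {R V W : Type*} [Ring R] [SMul R V]
    [AddCommGroup W] [Module R W] {p q : R} (hpq : IsSMulRegular W ⁅p, q⁆) {H : V → V → W}
    (hsymm : ∀ x y, H x y = H y x)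
    (hsmul : ∀ (r : R) (x y : V), H (r • x) y = r • H x y) (x y : V) :
    H x y = 0 := by
  have hlie : ⁅p, q⁆ • H x y = 0 := by
    rw [Ring.lie_def, sub_smul, sub_eq_zero]
    exact mul_smul_swap_of_symm_of_smul_left hsymm hsmul p q x y
  exact hpq.right_eq_zero_of_smul hlie

section QuaternionBasis

variable {R A : Type*} [CommRing R] [Ring A] [Algebra R A] {c₁ c₂ c₃ : R}

theorem quaternionBasis_lie_i_j (b : QuaternionAlgebra.Basis A c₁ 0 c₃) :
    ⁅b.i, b.j⁆ = (2 : R) • b.k := by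
  rw [Ring.lie_def, b.i_mul_j, b.j_mul_i]
  module

theorem isUnit_quaternionBasis_k (b : QuaternionAlgebra.Basis A c₁ c₂ c₃)
    (hc : IsUnit (c₁ * c₃)) : IsUnit b.k := by
  rw [← isUnit_mul_self_iff, b.k_mul_k, ← Algebra.algebraMap_eq_smul_one]
  exact (hc.map (algebraMap R A)).neg

theorem isUnit_quaternionBasis_lie_i_j (b : QuaternionAlgebra.Basis A c₁ 0 c₃)
    (hc : IsUnit (c₁ * c₃)) (h2 : IsUnit (2 : R)) : IsUnit ⁅b.i, b.j⁆ := by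
  rw [quaternionBasis_lie_i_j, Algebra.smul_def]
  exact (h2.map (algebraMap R A)).mul (isUnit_quaternionBasis_k b hc)

end QuaternionBasis

theorem exists_isUnit_lie_quaternion {R : Type*} [CommRing R] (h2 : IsUnit (2 : R)) :
    ∃ p q : Quaternion R, IsUnit ⁅p, q⁆ :=
  let b : QuaternionAlgebra.Basis (Quaternion R) (-1 : R) 0 (-1) := .self R
  ⟨b.i, b.j, isUnit_quaternionBasis_lie_i_j b (by simp) h2⟩

/-- A symmetric ℝ-bilinear map between left ℍ-modules which is
ℍ-linear in the first variable vanishes identically.  (The key "vanishing of the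
Hessian" computation in the proof of Deligne's lemma.) -/
theorem symm_bilinear_quaternionic_linear_eq_zero
    {V W : Type*} [AddCommGroup V] [AddCommGroup W]
    [Module ℝ V] [Module ℝ W]
    [Module (Quaternion ℝ) V] [Module (Quaternion ℝ) W]
    [IsScalarTower ℝ (Quaternion ℝ) V] [IsScalarTower ℝ (Quaternion ℝ) W]
    (H : V →ₗ[ℝ] V →ₗ[ℝ] W)
    (hsymm : ∀ x y : V, H x y = H y x)
    (hquat : ∀ (q : Quaternion ℝ) (x y : V), H (q • x) y = q • H x y) :
    H = 0 := by
  obtain ⟨p, q, hpq⟩ := exists_isUnit_lie_quaternion (R := ℝ) (isUnit_iff_ne_zero.2 two_ne_zero)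
  exact LinearMap.ext₂ <|
    symm_bilinear_quaternionic_linear_eq_zero_general (hpq.isSMulRegular W) hsymm hquat
end

section
/- Let X be a topological space and let n ∈ ℕ. For each i ∈ {0, 1, …, n} let (X^i_m)_{m ∈ ℕ} be a descending chain of closed subsets of X with X^i_0 = X and such that X^i_m = ∅ for all sufficiently large m. For each m ∈ ℕ define the closed set Y_m = ⋃ { ⋂_{i=0}^{n} X^i_{m_i} : (m_0, …, m_n) ∈ ℕ^{n+1}, m_0 + ⋯ + m_n = m }. Then for every i and m, every irreducible component S of X^i_m is an irreducible component of Y_M for some M ∈ ℕ. -/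
/-!
Let `μ j` be the largest index with `S ⊆ C j (μ j)`. Then `S ⊆ Y M` for `M = ∑ j, μ j`. Conversely,
an irreducible `T ⊇ S` inside the finite union of closed sets `Y M` lies in one of its pieces
`⋂ j, C j (f j)` with `∑ j, f j = M`; since `S` lies in that piece too, `f ≤ μ`, and equality of
the sums forces `f = μ`. Thus `T ⊆ C i (μ i) ⊆ C i m`, and the maximality of `S` in `C i m` gives
`T = S`.
-/

open Set

section IrreducibleComponents

variable {X : Type*} [TopologicalSpace X]

/-- `S` is an irreducible component of the subspace `A`: a maximal irreducible subset of `A`.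
Closedness of `S` in `A` is not imposed because it follows from maximality. -/
def IsIrreducibleComponentOf (S A : Set X) : Prop :=
  Maximal (fun T => IsIrreducible T ∧ T ⊆ A) S

theorem isIrreducibleComponentOf_iff {S A : Set X} :
    IsIrreducibleComponentOf S A ↔
      IsIrreducible S ∧ S ⊆ A ∧ ∀ T, IsIrreducible T → T ⊆ A → S ⊆ T → T = S := by
  rw [IsIrreducibleComponentOf, maximal_subset_iff, and_assoc]
  simp only [and_imp, eq_comm]

theorem exists_subset_of_isIrreducible_of_subset_biUnion {κ : Type*} {t : Set κ} (ht : t.Finite)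
    {Z : κ → Set X} (hZ : ∀ a ∈ t, IsClosed (Z a)) {T : Set X} (hT : IsIrreducible T)
    (hTZ : T ⊆ ⋃ a ∈ t, Z a) : ∃ a ∈ t, T ⊆ Z a := by
  classical
  rw [← sUnion_image, ← ht.coe_toFinset, ← Finset.coe_image] at hTZ
  simpa using isIrreducible_iff_sUnion_isClosed.mp hT _ (by simpa using hZ) hTZ

end IrreducibleComponents

section SumLocus

variable {X ι : Type*} [Fintype ι]

/-- The set `Y M` of the statement, for chains indexed by an arbitrary finite type: the union of the
intersections `⋂ j, C j (f j)` over all families of indices `f` with sum `M`. -/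
def sumLocus (C : ι → ℕ → Set X) (M : ℕ) : Set X :=
  ⋃ (f : ι → ℕ) (_ : ∑ j, f j = M), ⋂ j, C j (f j)

theorem iInter_subset_sumLocus (C : ι → ℕ → Set X) (f : ι → ℕ) :
    ⋂ j, C j (f j) ⊆ sumLocus C (∑ j, f j) :=
  subset_iUnion₂_of_subset f rfl Subset.rfl

theorem finite_setOf_sum_eq (ι : Type*) [Fintype ι] {N : Type*} [AddCommMonoid N]
    [Finset.HasAntidiagonal N] (a : N) : {f : ι → N | ∑ j, f j = a}.Finite := by
  classical
  exact (Finset.piAntidiag Finset.univ a).finite_toSet.subset fun f hf => by simpa using hf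

theorem exists_sum_eq_and_subset_of_subset_sumLocus [TopologicalSpace X] {C : ι → ℕ → Set X}
    (hC : ∀ j k, IsClosed (C j k)) {M : ℕ} {T : Set X} (hT : IsIrreducible T)
    (hTM : T ⊆ sumLocus C M) : ∃ f : ι → ℕ, ∑ j, f j = M ∧ ∀ j, T ⊆ C j (f j) := by
  obtain ⟨f, hf, hTf⟩ := exists_subset_of_isIrreducible_of_subset_biUnion (finite_setOf_sum_eq ι M)
    (fun f _ => isClosed_iInter fun j => hC j (f j)) hT hTM
  exact ⟨f, hf, subset_iInter_iff.mp hTf⟩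

theorem IsIrreducibleComponentOf.sumLocus_of_isGreatest [TopologicalSpace X] {C : ι → ℕ → Set X}
    (hC : ∀ j k, IsClosed (C j k)) {i : ι} (hanti : Antitone (C i)) {m : ℕ} {S : Set X}
    (hS : IsIrreducibleComponentOf S (C i m)) {μ : ι → ℕ}
    (hμ : ∀ j, IsGreatest {k | S ⊆ C j k} (μ j)) :
    IsIrreducibleComponentOf S (sumLocus C (∑ j, μ j)) := by
  have hSμ : S ⊆ ⋂ j, C j (μ j) := subset_iInter fun j => (hμ j).1
  refine ⟨⟨hS.prop.1, hSμ.trans (iInter_subset_sumLocus C μ)⟩, fun T ⟨hT, hTM⟩ hST => ?_⟩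
  obtain ⟨f, hsum, hTf⟩ := exists_sum_eq_and_subset_of_subset_sumLocus hC hT hTM
  have hle : ∀ j ∈ Finset.univ, f j ≤ μ j := fun j _ => (hμ j).2 (hST.trans (hTf j))
  have hfi : f i = μ i := (Finset.sum_eq_sum_iff_of_le hle).mp hsum i (Finset.mem_univ i)
  have hmi : m ≤ f i := hfi ▸ (hμ i).2 hS.prop.2
  exact hS.le_of_ge ⟨hT, (hTf i).trans (hanti hmi)⟩ hST

theorem irreducible_component_of_chain_is_component_of_sum_general [TopologicalSpace X]
    {C : ι → ℕ → Set X} (hC : ∀ j k, IsClosed (C j k)) {i : ι} (hanti : Antitone (C i)) {m : ℕ}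
    {S : Set X} (hS : IsIrreducibleComponentOf S (C i m)) (hne : ∀ j, {k | S ⊆ C j k}.Nonempty)
    (hbdd : ∀ j, BddAbove {k | S ⊆ C j k}) :
    ∃ M, IsIrreducibleComponentOf S (sumLocus C M) :=
  ⟨∑ j, sSup {k | S ⊆ C j k}, hS.sumLocus_of_isGreatest hC hanti fun j =>
    ⟨Nat.sSup_mem (hne j) (hbdd j), fun _ => le_csSup (hbdd j)⟩⟩

end SumLocus

theorem bddAbove_setOf_subset_of_eventually_eq_empty {X α : Type*} [LinearOrder α]
    {A : α → Set X} {S : Set X} (hS : S.Nonempty) (hA : ∃ N, ∀ m ≥ N, A m = ∅) :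
    BddAbove {k | S ⊆ A k} := by
  obtain ⟨N, hN⟩ := hA
  refine ⟨N, fun k hk => le_of_not_ge fun hNk => ?_⟩
  exact (hS.mono hk).ne_empty (hN k hNk)

/-- the combinatorial-topological lemma of Section 4: given, for each
`i ∈ {0, …, n}`, a descending chain of closed subsets `C i 0 = X ⊇ C i 1 ⊇ …` which
is eventually empty, every irreducible component `S` of some `C i m` is an
irreducible component of `Y M = ⋃ { ⋂ᵢ C i mᵢ : ∑ mᵢ = M }` for some `M`. -/
theorem irreducible_component_of_chain_is_component_of_sum
    {X : Type*} [TopologicalSpace X] (n : ℕ)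
    (C : Fin (n + 1) → ℕ → Set X)
    (hclosed : ∀ i m, IsClosed (C i m))
    (hanti : ∀ i, Antitone (C i))
    (htop : ∀ i, C i 0 = Set.univ)
    (hempty : ∀ i, ∃ N, ∀ m ≥ N, C i m = ∅)
    (Y : ℕ → Set X)
    (hY : ∀ m, Y m =
      ⋃ (f : Fin (n + 1) → ℕ) (_ : (∑ i, f i) = m), ⋂ i, C i (f i))
    (i : Fin (n + 1)) (m : ℕ) (S : Set X)
    (hSirr : IsIrreducible S) (hSsub : S ⊆ C i m)
    (hSmax : ∀ T : Set X, IsIrreducible T → T ⊆ C i m → S ⊆ T → T = S) :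
    ∃ M : ℕ, S ⊆ Y M ∧
      ∀ T : Set X, IsIrreducible T → T ⊆ Y M → S ⊆ T → T = S := by
  obtain ⟨M, hM⟩ := irreducible_component_of_chain_is_component_of_sum_general hclosed (hanti i)
    (isIrreducibleComponentOf_iff.mpr ⟨hSirr, hSsub, hSmax⟩)
    (fun j => ⟨0, (subset_univ S).trans (htop j).superset⟩)
    (fun j => bddAbove_setOf_subset_of_eventually_eq_empty hSirr.nonempty (hempty j))
  exact ⟨M, hY M ▸ (isIrreducibleComponentOf_iff.mp hM).2⟩
end
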